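/- Under the twisted dual equivalence moves d̃_i on permutations, two permutations w and u of {1,...,n} are connected by a sequence of moves d̃_{i_1},...,d̃_{i_k} if and only if inv(w) = inv(u) and [w_1 > w_n ⟺ u_1 > u_n]. -/

import Mathlib

/-!  Permutations of `{1,…,n}` are modelled as `Equiv.Perm (Fin n)` with 0-based
values: the value `v : Fin n` stands for the paper's value `v+1`, and
`w.symm v` is the position of the value `v` in one-line notation.
`dmove n i` is the paper's elementary dual equivalence involution `d_{i+1}`
(so `i` ranges over `1 ≤ i` and `i + 1 < n`, matching the paper's `1 < i+1 < n`),
and `dtmove n i` is the twisted move `d̃_{i+1}`. -/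

/-- Haiman's elementary dual equivalence move: if the position of the middle
value `i` lies between the positions of `i-1` and `i+1`, do nothing; otherwise
interchange the value `i` with whichever of `i-1, i+1` is positioned further
from it. -/
def dmove (n : ℕ) (i : ℕ) (w : Equiv.Perm (Fin n)) : Equiv.Perm (Fin n) :=
  if h : 1 ≤ i ∧ i + 1 < n then
    let a : Fin n := ⟨i - 1, by omega⟩
    let b : Fin n := ⟨i, by omega⟩
    let c : Fin n := ⟨i + 1, by omega⟩
    let pa := w.symm a
    let pb := w.symm b
    let pc := w.symm c
    if (pa < pb ∧ pb < pc) ∨ (pc < pb ∧ pb < pa) then w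
    else if pb < pa ∧ pb < pc then
      (if pa < pc then Equiv.swap c b else Equiv.swap a b) * w
    else
      (if pa < pc then Equiv.swap a b else Equiv.swap c b) * w
  else w

/-- The twisted elementary dual equivalence move: if the position of the middle
value `i` lies between those of `i-1` and `i+1`, do nothing; otherwise
cyclically rotate the three values `i-1, i, i+1` so that `i` moves to the
other side of `i-1` and `i+1`, the outer two keeping their relative order. -/
def dtmove (n : ℕ) (i : ℕ) (w : Equiv.Perm (Fin n)) : Equiv.Perm (Fin n) :=
  if h : 1 ≤ i ∧ i + 1 < n then
    let a : Fin n := ⟨i - 1, by omega⟩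
    let b : Fin n := ⟨i, by omega⟩
    let c : Fin n := ⟨i + 1, by omega⟩
    let pa := w.symm a
    let pb := w.symm b
    let pc := w.symm c
    let u := if pa < pc then a else c   -- the outer value occurring first
    let v := if pa < pc then c else a   -- the outer value occurring last
    if (pa < pb ∧ pb < pc) ∨ (pc < pb ∧ pb < pa) then w
    else if pb < pa ∧ pb < pc then
      (Equiv.swap b u * Equiv.swap u v) * w
    else
      (Equiv.swap u b * Equiv.swap b v) * w
  else w

/-- The inverse descent signature: `sig n w j = +1` if the (0-based) value `j`
occurs to the left of the value `j+1` in the one-line notation of `w`, and `-1`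
otherwise.  (`sig n w (j-1)` is the paper's `σ(w)_j`.) -/
def sig (n : ℕ) (w : Equiv.Perm (Fin n)) (j : ℕ) : ℤ :=
  if h : j + 1 < n then
    if w.symm ⟨j, by omega⟩ < w.symm ⟨j + 1, h⟩ then 1 else -1
  else 1

/-- The number of inversions of a permutation of `Fin n`. -/
def linv (n : ℕ) (w : Equiv.Perm (Fin n)) : ℕ :=
  ((Finset.univ : Finset (Fin n × Fin n)).filter
    (fun pq => pq.1 < pq.2 ∧ w pq.2 < w pq.1)).card

/-! Read `w` through its inverse: list the positions of the values `1, …, n`. On these words `d̃_i`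
lets the first or the last of the letters number `i - 1`, `i`, `i + 1` jump over the two others if
it lies between them in value, the defining relation of the forgotten monoid of Lascoux and
Schützenberger. A jump over a smaller and a larger letter preserves the number of inversions, and
since the least and the greatest letter never jump, their order is preserved as well.

Conversely, let two words agree in these invariants. Reversing both if necessary, the least letter
`lo` precedes the greatest letter `hi`, and jumps bring `lo` to the front. Induction connects the
remaining words, unless their own least letter `m` precedes `hi` in one and follows it in the other.
In that case their number of inversions lies in a range where they can be taken to be `b m s` and
`hi m t` such that `b s` and `hi t` have equally many inversions as well. Then `m` jumps to the very
front of `lo b m s`, induction turns `lo b s` into `lo hi t`, and `m` jumps back. -/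

section Words

open List

variable {α : Type*} [LinearOrder α]

theorem succ_choose_two (r : ℕ) : (r + 1).choose 2 = r + r.choose 2 := by
  simp [Nat.choose_succ_succ' r 1]

theorem mem_uIoo_iff {a b x : α} : x ∈ Set.uIoo a b ↔ a < x ∧ x < b ∨ b < x ∧ x < a := by
  rw [Set.uIoo_eq_union]; rfl

/-- The number of inversions of a word; equal letters do not form an inversion. -/
def invCount : List α → ℕ
  | [] => 0
  | a :: l => l.countP (· < a) + invCount l

section invCount

theorem invCount_cons_of_forall_le {a : α} {l : List α} (h : ∀ x ∈ l, a ≤ x) :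
    invCount (a :: l) = invCount l := by
  have : l.countP (· < a) = 0 := by simpa using h
  rw [invCount, this, zero_add]

theorem invCount_cons_cons_of_forall_lt {a m : α} {l : List α} (h : ∀ x ∈ a :: l, m < x) :
    invCount (a :: m :: l) = invCount (a :: l) + 1 := by
  obtain ⟨hma, hml⟩ := forall_mem_cons.1 h
  have hmin := invCount_cons_of_forall_le fun x hx => (hml x hx).le
  rw [invCount, hmin, invCount, countP_cons_of_pos (by simpa using hma)]
  omega

theorem invCount_append_singleton (l : List α) (a : α) :
    invCount (l ++ [a]) = invCount l + l.countP (a < ·) := by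
  induction l with
  | nil => simp [invCount]
  | cons b l ih =>
    simp only [cons_append, invCount, ih, countP_append, countP_cons, countP_nil]
    omega

theorem invCount_append_left_congr (s : List α) {p q : List α} (hpq : p ~ q)
    (h : invCount p = invCount q) : invCount (s ++ p) = invCount (s ++ q) := by
  induction s with
  | nil => exact h
  | cons a s ih => simp only [cons_append, invCount, ih, (hpq.append_left s).countP_eq]

theorem invCount_le_choose_two (l : List α) : invCount l ≤ l.length.choose 2 := by
  induction l with
  | nil => simp [invCount]
  | cons a l ih =>
    rw [invCount, length_cons, succ_choose_two]
    exact Nat.add_le_add countP_le_length ih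

theorem invCount_add_invCount_reverse {l : List α} (hl : l.Nodup) :
    invCount l + invCount l.reverse = l.length.choose 2 := by
  induction l with
  | nil => simp [invCount]
  | cons a l ih =>
    obtain ⟨ha, hl⟩ := nodup_cons.1 hl
    have hgt : l.countP (a < ·) = l.countP (fun x => ¬decide (x < a)) :=
      countP_congr fun x hx => by
        have : x ≠ a := ne_of_mem_of_not_mem hx ha
        simpa using ⟨le_of_lt, this.symm.lt_of_le⟩
    have hlen := length_eq_countP_add_countP (· < a) (l := l)
    rw [reverse_cons, invCount_append_singleton, countP_reverse, invCount, length_cons,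
      succ_choose_two, ← ih hl, hgt]
    omega

theorem exists_perm_cons_forall_lt {l : List α} (hne : l ≠ []) (hl : l.Nodup) :
    ∃ m s, l ~ m :: s ∧ ∀ x ∈ s, m < x := by
  obtain ⟨m, hm, hmin⟩ := l.toFinset.exists_min_image id (by simpa using hne)
  rw [mem_toFinset] at hm
  refine ⟨m, l.erase m, perm_cons_erase hm, fun x hx => ?_⟩
  have hxm : m ≠ x := fun h => hl.not_mem_erase (h ▸ hx)
  exact (hmin x (by simpa using mem_of_mem_erase hx)).lt_of_ne hxm

theorem exists_perm_cons_forall_gt {l : List α} (hne : l ≠ []) (hl : l.Nodup) :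
    ∃ m s, l ~ m :: s ∧ ∀ x ∈ s, x < m :=
  exists_perm_cons_forall_lt (α := αᵒᵈ) hne hl

theorem exists_perm_invCount_eq {l : List α} (hl : l.Nodup) {k : ℕ} (hk : k ≤ l.length.choose 2) :
    ∃ p, p ~ l ∧ invCount p = k := by
  induction hn : l.length generalizing l k with
  | zero =>
    obtain rfl := length_eq_zero_iff.1 hn
    exact ⟨[], .refl _, by simpa [invCount, eq_comm] using hk⟩
  | succ n ih =>
    obtain ⟨m, s, hs, hms⟩ := exists_perm_cons_forall_lt (ne_nil_of_length_eq_add_one hn) hl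
    have hsl : s.length = n := by simpa [hn] using hs.length_eq.symm
    have hsn : s.Nodup := (nodup_cons.1 (hs.nodup_iff.1 hl)).2
    rw [hn, succ_choose_two] at hk
    obtain hkn | hnk := lt_or_ge k n
    · have hk' : k ≤ s.length.choose 2 := by
        obtain ⟨r, rfl⟩ := Nat.exists_eq_add_one_of_ne_zero (Nat.ne_zero_of_lt hkn)
        rw [hsl, succ_choose_two]
        omega
      obtain ⟨p, hp, rfl⟩ := ih hsn hk' hsl
      exact ⟨m :: p, (hp.cons m).trans hs.symm,
        invCount_cons_of_forall_le fun x hx => (hms x (hp.mem_iff.1 hx)).le⟩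
    · obtain ⟨p, hp, hpk⟩ := ih hsn (k := k - n) (by rw [hsl]; omega) hsl
      refine ⟨p ++ [m], (perm_append_singleton m p).trans ((hp.cons m).trans hs.symm), ?_⟩
      have hcount : p.countP (m < ·) = p.length := by
        simpa using fun x hx => hms x (hp.mem_iff.1 hx)
      rw [invCount_append_singleton, hcount, hp.length_eq]
      omega

theorem exists_perm_invCount_cons_eq {a : α} {l : List α} (hl : l.Nodup) {k : ℕ}
    (hle : l.countP (· < a) ≤ k) (hk : k ≤ l.countP (· < a) + l.length.choose 2) :
    ∃ p, p ~ l ∧ invCount (a :: p) = k := by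
  obtain ⟨p, hp, hpk⟩ := exists_perm_invCount_eq hl (k := k - l.countP (· < a)) (by omega)
  refine ⟨p, hp, ?_⟩
  rw [invCount, hp.countP_eq, hpk]
  omega

theorem exists_perm_max_cons_invCount_eq {M : α} {l : List α} (hl : l.Nodup) (hM : M ∈ l)
    (hmax : ∀ x ∈ l, x ≤ M) {k : ℕ} (hle : l.length ≤ k + 1) (hk : k ≤ l.length.choose 2) :
    ∃ p, l ~ M :: p ∧ invCount (M :: p) = k := by
  have hlM := perm_cons_erase hM
  have hcount : (l.erase M).countP (· < M) = (l.erase M).length := by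
    simpa [hl.mem_erase_iff] using fun x hxM hx => (hmax x hx).lt_of_ne hxM
  rw [hlM.length_eq, length_cons] at hle hk
  rw [succ_choose_two] at hk
  obtain ⟨p, hp, hpk⟩ := exists_perm_invCount_cons_eq (a := M) (hl.erase M) (k := k)
    (by omega) (by omega)
  exact ⟨p, hlM.trans (hp.cons M).symm, hpk⟩

/-- The first letter is taken to be the second largest one. -/
theorem exists_perm_cons_ne_max_invCount_eq {M : α} {l : List α} (hl : l.Nodup) (hM : M ∈ l)
    (hmax : ∀ x ∈ l, x ≤ M) {k : ℕ} (hle : l.length ≤ k + 1) (hk : k < l.length.choose 2) :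
    ∃ b p, b ≠ M ∧ l ~ b :: p ∧ invCount (b :: p) = k := by
  have hlM := perm_cons_erase hM
  have hne : l.erase M ≠ [] := fun h => by simp [hlM.length_eq, h] at hk
  obtain ⟨b, s, hs, hsb⟩ := exists_perm_cons_forall_gt hne (hl.erase M)
  obtain ⟨hbM, hbl⟩ := hl.mem_erase_iff.1 (hs.mem_iff.2 mem_cons_self)
  have hls : l ~ b :: M :: s := (hlM.trans (hs.cons M)).trans (.swap b M s)
  have hcount : (M :: s).countP (· < b) = s.length := by
    simpa [countP_cons, hmax b hbl] using hsb
  rw [hls.length_eq, length_cons, length_cons] at hle hk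
  rw [succ_choose_two] at hk
  obtain ⟨p, hp, hpk⟩ := exists_perm_invCount_cons_eq (a := b) (l := M :: s) (k := k)
    (nodup_cons.1 (hls.nodup_iff.1 hl)).2 (by omega) (by rw [length_cons]; omega)
  exact ⟨b, p, hbM, hls.trans (hp.cons b).symm, hpk⟩

end invCount

/-- One application of the relations of Lascoux and Schützenberger's forgotten monoid,
`yxz ↔ xzy` and `zxy ↔ yzx` for letters `x < y < z`. The two relations are merged: a letter `m` may
jump over two adjacent letters with `m` strictly between them in value. -/
inductive ForgottenStep : List α → List α → Prop
  | jumpRight {x m y : α} (s t : List α) (h : m ∈ Set.uIoo x y) :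
      ForgottenStep (s ++ m :: x :: y :: t) (s ++ x :: y :: m :: t)
  | jumpLeft {x m y : α} (s t : List α) (h : m ∈ Set.uIoo x y) :
      ForgottenStep (s ++ x :: y :: m :: t) (s ++ m :: x :: y :: t)

namespace ForgottenStep

variable {p q : List α}

theorem symm (h : ForgottenStep p q) : ForgottenStep q p := by
  cases h with
  | jumpRight s t h => exact jumpLeft s t h
  | jumpLeft s t h => exact jumpRight s t h

theorem cons (a : α) (h : ForgottenStep p q) : ForgottenStep (a :: p) (a :: q) := by
  cases h with
  | jumpRight s t h => exact jumpRight (a :: s) t h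
  | jumpLeft s t h => exact jumpLeft (a :: s) t h

theorem reverse (h : ForgottenStep p q) : ForgottenStep p.reverse q.reverse := by
  cases h with
  | jumpRight s t h => simpa using jumpLeft t.reverse s.reverse (by rwa [Set.uIoo_comm])
  | jumpLeft s t h => simpa using jumpRight t.reverse s.reverse (by rwa [Set.uIoo_comm])

theorem perm (h : ForgottenStep p q) : p ~ q := by
  cases h with
  | jumpRight s t h => exact (perm_middle (l₁ := [_, _])).symm.append_left s
  | jumpLeft s t h => exact (perm_middle (l₁ := [_, _])).append_left s

theorem invCount_eq (h : ForgottenStep p q) : invCount p = invCount q := by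
  have jump {x m y : α} (s t : List α) (h : m ∈ Set.uIoo x y) :
      invCount (s ++ m :: x :: y :: t) = invCount (s ++ x :: y :: m :: t) := by
    refine invCount_append_left_congr s (perm_middle (l₁ := [x, y])).symm ?_
    rcases mem_uIoo_iff.1 h with ⟨hx, hy⟩ | ⟨hy, hx⟩ <;>
      grind [invCount]
  cases h with
  | jumpRight s t h => exact jump s t h
  | jumpLeft s t h => exact (jump s t h).symm

/-- The jumping letter is neither the least nor the greatest one. -/
theorem sublist_of_extremes {lo hi : α} {s : List α} (hs : ∀ x ∈ s, x = lo ∨ x = hi)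
    (h : ForgottenStep p q) (hp : ∀ x ∈ p, x ∈ Set.Icc lo hi) (hsp : s <+ p) : s <+ q := by
  have ne_extreme {x m y : α} (h : m ∈ Set.uIoo x y) (hx : x ∈ Set.Icc lo hi)
      (hy : y ∈ Set.Icc lo hi) : ¬(m = lo ∨ m = hi) := by
    have := Set.uIoo_subset_Ioo hx hy h
    exact not_or.2 ⟨this.1.ne', this.2.ne⟩
  have hfilter : p.filter (fun x => x = lo ∨ x = hi) = q.filter (fun x => x = lo ∨ x = hi) := by
    cases h with
    | jumpRight s t h | jumpLeft s t h =>
      have := ne_extreme h (hp _ (by simp)) (hp _ (by simp))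
      simp [filter_append, filter_cons, this]
  calc s = s.filter (fun x => x = lo ∨ x = hi) := (filter_eq_self.2 (by simpa using hs)).symm
    _ <+ q.filter (fun x => x = lo ∨ x = hi) := hfilter ▸ hsp.filter _
    _ <+ q := filter_sublist

end ForgottenStep

/-- The congruence of the forgotten monoid: words connected by a sequence of jumps. -/
abbrev ForgottenEqv : List α → List α → Prop :=
  Relation.ReflTransGen ForgottenStep

namespace ForgottenEqv

variable {p q : List α}

theorem symm (h : ForgottenEqv p q) : ForgottenEqv q p :=
  haveI : Std.Symm (ForgottenStep (α := α)) := ⟨fun _ _ => ForgottenStep.symm⟩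
  Std.Symm.symm _ _ h

theorem cons (a : α) (h : ForgottenEqv p q) : ForgottenEqv (a :: p) (a :: q) :=
  h.lift (a :: ·) fun _ _ => ForgottenStep.cons a

theorem reverse (h : ForgottenEqv p q) : ForgottenEqv p.reverse q.reverse :=
  h.lift List.reverse fun _ _ => ForgottenStep.reverse

theorem jumpRight {x m y : α} (h : m ∈ Set.uIoo x y) (t : List α) :
    ForgottenEqv (m :: x :: y :: t) (x :: y :: m :: t) :=
  .single (.jumpRight [] t h)

theorem perm (h : ForgottenEqv p q) : p ~ q := by
  induction h with
  | refl => exact .refl p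
  | tail _ h ih => exact ih.trans h.perm

theorem invCount_eq (h : ForgottenEqv p q) : invCount p = invCount q := by
  induction h with
  | refl => rfl
  | tail _ h ih => exact ih.trans h.invCount_eq

theorem sublist_of_extremes {lo hi : α} {s : List α} (hs : ∀ x ∈ s, x = lo ∨ x = hi)
    (h : ForgottenEqv p q) (hp : ∀ x ∈ p, x ∈ Set.Icc lo hi) (hsp : s <+ p) : s <+ q := by
  induction h with
  | refl => exact hsp
  | tail hpq h ih => exact h.sublist_of_extremes hs (fun x hx => hp x ((perm hpq).mem_iff.2 hx)) ih

/-- A letter `a` next to the minimum `m` can be made to jump over it: carry `a` to the right until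
it meets a larger letter, which then moves back. -/
theorem exists_swap_min {a m c : α} {l : List α} (hma : m < a) (hl : ∀ x ∈ l, m < x) (ha : a ∉ l)
    (hc : c ∈ l) (hac : a < c) :
    ∃ d l', a < d ∧ ForgottenEqv (a :: m :: l) (m :: d :: l') := by
  induction l with
  | nil => simp at hc
  | cons b l ih =>
    obtain ⟨hab, hal⟩ := not_or.1 (mem_cons.not.1 ha)
    obtain ⟨hmb, hml⟩ := forall_mem_cons.1 hl
    obtain hab | hba := lt_or_gt_of_ne hab
    · exact ⟨b, a :: l, hab, jumpRight (Set.mem_uIoo_of_lt hma hab) l⟩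
    · have hcl : c ∈ l := (mem_cons.1 hc).resolve_left fun h => hac.not_gt (h ▸ hba)
      obtain ⟨d, l', had, h⟩ := ih hml hal hcl
      refine ⟨d, b :: l', had, ?_⟩
      calc ForgottenEqv (a :: m :: b :: l) (b :: a :: m :: l) :=
            (jumpRight (Set.mem_uIoo_of_gt hmb hba) l).symm
        ForgottenEqv _ (b :: m :: d :: l') := h.cons b
        ForgottenEqv _ (m :: d :: b :: l') :=
            jumpRight (Set.mem_uIoo_of_lt hmb (hba.trans had)) l'

end ForgottenEqv

/-- Words with distinct letters between `lo` and `hi` in which `lo` occurs to the left of `hi`;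
reading backwards, `Rising lo hi p.reverse` says that `hi` occurs to the left of `lo`. -/
structure Rising (lo hi : α) (p : List α) : Prop where
  nodup : p.Nodup
  mem_Icc : ∀ x ∈ p, x ∈ Set.Icc lo hi
  sublist : [lo, hi] <+ p

theorem rising_cons_iff {lo hi : α} {p : List α} :
    Rising lo hi (lo :: p) ↔ p.Nodup ∧ hi ∈ p ∧ ∀ x ∈ p, x ∈ Set.Ioc lo hi := by
  constructor
  · rintro ⟨hnd, hIcc, hsub⟩
    obtain ⟨hlo, hnd⟩ := nodup_cons.1 hnd
    refine ⟨hnd, by simpa using hsub, fun x hx => ?_⟩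
    have := hIcc x (mem_cons_of_mem lo hx)
    exact ⟨this.1.lt_of_ne (ne_of_mem_of_not_mem hx hlo).symm, this.2⟩
  · rintro ⟨hnd, hhi, hIoc⟩
    have hlohi : lo ≤ hi := (hIoc hi hhi).1.le
    refine ⟨nodup_cons.2 ⟨fun h => (hIoc lo h).1.false, hnd⟩, ?_, by simpa using hhi⟩
    exact forall_mem_cons.2 ⟨⟨le_rfl, hlohi⟩, fun x hx => Set.Ioc_subset_Icc_self (hIoc x hx)⟩

theorem rising_or_rising_reverse {lo hi : α} {p : List α} (hp : p.Nodup)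
    (hIcc : ∀ x ∈ p, x ∈ Set.Icc lo hi) (hlo : lo ∈ p) (hhi : hi ∈ p) (hne : lo ≠ hi) :
    Rising lo hi p ∨ Rising lo hi p.reverse := by
  obtain ⟨s, t, rfl⟩ := append_of_mem hlo
  have hhi' : hi ∈ s ∨ hi ∈ t := by simpa [hne.symm] using hhi
  refine hhi'.symm.imp (fun h => ⟨hp, hIcc, ?_⟩)
    (fun h => ⟨nodup_reverse.2 hp, fun x hx => hIcc x (mem_reverse.1 hx), ?_⟩)
  · exact ((singleton_sublist.2 h).cons_cons lo).trans (sublist_append_right s _)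
  · rw [← reverse_sublist, reverse_reverse]
    exact (singleton_sublist.2 h).append (singleton_sublist.2 mem_cons_self)

namespace Rising

variable {lo hi : α} {p q : List α}

theorem of_perm (hp : Rising lo hi p) (hpq : p ~ q) (hq : [lo, hi] <+ q) : Rising lo hi q where
  nodup := hpq.nodup_iff.1 hp.nodup
  mem_Icc x hx := hp.mem_Icc x (hpq.mem_iff.2 hx)
  sublist := hq

theorem of_forgottenEqv (hp : Rising lo hi p) (hpq : ForgottenEqv p q) : Rising lo hi q :=
  hp.of_perm (ForgottenEqv.perm hpq)
    (ForgottenEqv.sublist_of_extremes (by simp) hpq hp.mem_Icc hp.sublist)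

theorem of_cons {a : α} (hp : Rising lo hi (a :: p)) (ha : a ≠ lo) : Rising lo hi p where
  nodup := (nodup_cons.1 hp.nodup).2
  mem_Icc x hx := hp.mem_Icc x (mem_cons_of_mem a hx)
  sublist := (cons_sublist_cons'.1 hp.sublist).resolve_right fun h => ha h.1.symm

theorem exists_forgottenEqv_cons (hp : Rising lo hi p) : ∃ l, ForgottenEqv p (lo :: l) := by
  induction p with
  | nil => simpa using hp.sublist
  | cons a p ih =>
    obtain rfl | ha := eq_or_ne a lo
    · exact ⟨p, .refl⟩
    · obtain ⟨l, hl⟩ := ih (hp.of_cons ha)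
      have hal : a ∉ lo :: l := (ForgottenEqv.perm hl).mem_iff.not.1 (nodup_cons.1 hp.nodup).1
      obtain ⟨-, hhi, hIoc⟩ := rising_cons_iff.1 ((hp.of_cons ha).of_forgottenEqv hl)
      have ha_mem := hp.mem_Icc a mem_cons_self
      have hahi : a < hi := ha_mem.2.lt_of_ne fun h => hal (h ▸ mem_cons_of_mem lo hhi)
      obtain ⟨d, l', -, h⟩ := ForgottenEqv.exists_swap_min (ha_mem.1.lt_of_ne' ha)
        (fun x hx => (hIoc x hx).1) (fun h => hal (mem_cons_of_mem lo h)) hhi hahi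
      exact ⟨d :: l', (ForgottenEqv.cons a hl).trans h⟩

theorem invCount_le (hp : Rising lo hi p) : invCount p ≤ (p.length - 1).choose 2 := by
  obtain ⟨l, hl⟩ := hp.exists_forgottenEqv_cons
  have hlo := (rising_cons_iff.1 (hp.of_forgottenEqv hl)).2.2
  rw [ForgottenEqv.invCount_eq hl, (ForgottenEqv.perm hl).length_eq,
    invCount_cons_of_forall_le fun x hx => (hlo x hx).1.le]
  exact invCount_le_choose_two l

theorem le_invCount_of_reverse (hp : Rising lo hi p.reverse) : p.length - 1 ≤ invCount p := by
  have hle := hp.invCount_le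
  have hadd := invCount_add_invCount_reverse (nodup_reverse.1 hp.nodup)
  obtain ⟨r, hr⟩ : ∃ r, p.length = r + 1 :=
    Nat.exists_eq_add_one.2
      (length_pos_of_mem (mem_reverse.1 (hp.sublist.subset mem_cons_self)))
  rw [length_reverse, hr, Nat.add_sub_cancel] at hle
  rw [hr, succ_choose_two] at hadd
  omega

/-- The words `b :: lo :: s` and `hi :: lo :: t` then have as many inversions as `p`, but `lo` and
`hi` occur in opposite orders in them. -/
theorem exists_perm_cons_cons_of_reverse (hp : Rising lo hi p) (hq : Rising lo hi q.reverse)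
    (hpq : p ~ q) (hinv : invCount p = invCount q) :
    ∃ b s t, p ~ lo :: b :: s ∧ b :: s ~ hi :: t ∧ hi ∈ s ∧
      invCount (b :: s) = invCount (hi :: t) ∧ invCount p = invCount (b :: s) + 1 := by
  obtain ⟨l, hl⟩ := hp.exists_forgottenEqv_cons
  have hpl := ForgottenEqv.perm hl
  obtain ⟨hnd, hhi, hIoc⟩ := rising_cons_iff.1 (hp.of_forgottenEqv hl)
  have hupper : invCount p ≤ l.length.choose 2 := by
    simpa [hpl.length_eq] using hp.invCount_le
  have hlower : l.length ≤ invCount p := by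
    simpa [← hpq.length_eq, hpl.length_eq, ← hinv] using hq.le_invCount_of_reverse
  obtain ⟨k, hk⟩ : ∃ k, invCount p = k + 1 :=
    Nat.exists_eq_add_one.2 ((length_pos_of_mem hhi).trans_le hlower)
  have hmax : ∀ x ∈ l, x ≤ hi := fun x hx => (hIoc x hx).2
  obtain ⟨b, s, hbhi, hls, hsk⟩ :=
    exists_perm_cons_ne_max_invCount_eq hnd hhi hmax (k := k) (by omega) (by omega)
  obtain ⟨t, hlt, htk⟩ :=
    exists_perm_max_cons_invCount_eq hnd hhi hmax (k := k) (by omega) (by omega)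
  exact ⟨b, s, t, hpl.trans (hls.cons lo), hls.symm.trans hlt,
    (mem_cons.1 (hls.mem_iff.1 hhi)).resolve_left hbhi.symm, hsk.trans htk.symm, by rw [hk, hsk]⟩

end Rising

/-- The classification of rising words of length `n`, named because it serves as the induction
hypothesis of several lemmas. -/
def RisingClassification (α : Type*) [LinearOrder α] (n : ℕ) : Prop :=
  ∀ ⦃lo hi : α⦄ ⦃p q : List α⦄, p.length = n → Rising lo hi p → Rising lo hi q → p ~ q →
    invCount p = invCount q → ForgottenEqv p q

namespace RisingClassification

variable {n : ℕ} {lo m hi : α} {p q : List α}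

theorem forgottenEqv_of_reverse (H : RisingClassification α n) (hn : p.length = n)
    (hp : Rising lo hi p.reverse) (hq : Rising lo hi q.reverse) (hpq : p ~ q)
    (hinv : invCount p = invCount q) : ForgottenEqv p q := by
  have hinv' : invCount p.reverse = invCount q.reverse := by
    have hp' := invCount_add_invCount_reverse (nodup_reverse.1 hp.nodup)
    have hq' := invCount_add_invCount_reverse (nodup_reverse.1 hq.nodup)
    rw [hpq.length_eq] at hp'
    omega
  have hpq' : p.reverse ~ q.reverse := p.reverse_perm.trans (hpq.trans q.reverse_perm.symm)
  simpa using ForgottenEqv.reverse (H (by simpa using hn) hp hq hpq' hinv')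

/-- A smaller letter `lo` in front makes it possible to reverse the order of `m` and `hi`: `m` jumps
over `lo` and the letter `b` following it, the induction hypothesis for words from `lo` to `hi` puts
`hi` in place of `b`, and `m` jumps back. -/
theorem forgottenEqv_cons_cons_of_reverse (H : RisingClassification α n) (hn : p.length = n)
    (hlo : lo < m) (hp : Rising m hi p) (hq : Rising m hi q.reverse) (hpq : p ~ q)
    (hinv : invCount p = invCount q) : ForgottenEqv (lo :: p) (lo :: q) := by
  obtain ⟨b, s, t, hps, hst, hhi, hk, hinvp⟩ := hp.exists_perm_cons_cons_of_reverse hq hpq hinv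
  obtain ⟨hnd, -, hIoc⟩ :=
    rising_cons_iff.1 (hp.of_perm hps (by simpa using mem_cons_of_mem b hhi))
  have hm : ∀ x ∈ b :: s, m < x := fun x hx => (hIoc x hx).1
  have hmb : m < b := hm b mem_cons_self
  have hmhi : m < hi := hm hi (mem_cons_of_mem b hhi)
  have hp_bms : p ~ b :: m :: s := hps.trans (.swap b m s)
  have hq_himt : q ~ hi :: m :: t := hpq.symm.trans ((hps.trans (hst.cons m)).trans (.swap hi m t))
  have rising_bms : Rising m hi (b :: m :: s) := hp.of_perm hp_bms
    (((singleton_sublist.2 hhi).cons_cons m).cons b)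
  have rising_himt : Rising m hi (hi :: m :: t).reverse :=
    hq.of_perm (q.reverse_perm.trans (hq_himt.trans (reverse_perm _).symm))
      (reverse_sublist.1 (by simp))
  have rising_lo : Rising lo hi (lo :: b :: s) := rising_cons_iff.2
    ⟨hnd, mem_cons_of_mem b hhi, fun x hx => ⟨hlo.trans (hm x hx), (hIoc x hx).2⟩⟩
  have bs_eqv_hit : ForgottenEqv (lo :: b :: s) (lo :: hi :: t) :=
    H (by simpa [hn] using hps.length_eq.symm) rising_lo
      (rising_lo.of_perm (hst.cons lo) (((nil_sublist t).cons_cons hi).cons_cons lo)) (hst.cons lo)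
      (by
        rwa [invCount_cons_of_forall_le fun x hx => (hlo.trans (hm x hx)).le,
          invCount_cons_of_forall_le fun x hx => (hlo.trans (hm x (hst.mem_iff.2 hx))).le])
  calc ForgottenEqv (lo :: p) (lo :: b :: m :: s) :=
        ForgottenEqv.cons lo (H hn hp rising_bms hp_bms
          (hinvp.trans (invCount_cons_cons_of_forall_lt hm).symm))
    ForgottenEqv _ (m :: lo :: b :: s) :=
        (ForgottenEqv.jumpRight (Set.mem_uIoo_of_lt hlo hmb) s).symm
    ForgottenEqv _ (m :: lo :: hi :: t) := bs_eqv_hit.cons m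
    ForgottenEqv _ (lo :: hi :: m :: t) := ForgottenEqv.jumpRight (Set.mem_uIoo_of_lt hlo hmhi) t
    ForgottenEqv _ (lo :: q) := ForgottenEqv.cons lo <| ForgottenEqv.symm <|
        H.forgottenEqv_of_reverse (hpq.length_eq.symm.trans hn) hq rising_himt hq_himt (by
          rw [← hinv, hinvp, hk,
            invCount_cons_cons_of_forall_lt fun x hx => hm x (hst.mem_iff.2 hx)])

theorem forgottenEqv_cons_cons (H : RisingClassification α n) (hn : p.length = n)
    (hp : Rising lo hi (lo :: p)) (hq : Rising lo hi (lo :: q)) (hpq : p ~ q)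
    (hinv : invCount p = invCount q) : ForgottenEqv (lo :: p) (lo :: q) := by
  obtain ⟨hnd, hhi, hIoc⟩ := rising_cons_iff.1 hp
  obtain ⟨hnd', hhi', -⟩ := rising_cons_iff.1 hq
  obtain ⟨m, s, hs, hm⟩ := exists_perm_cons_forall_lt (ne_nil_of_mem hhi) hnd
  have hmp : m ∈ p := hs.mem_iff.2 mem_cons_self
  have hIcc : ∀ x ∈ p, x ∈ Set.Icc m hi := fun x hx =>
    ⟨(mem_cons.1 (hs.mem_iff.1 hx)).elim ge_of_eq fun h => (hm x h).le, (hIoc x hx).2⟩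
  obtain rfl | hmhi := eq_or_ne m hi
  · obtain rfl : s = [] := eq_nil_iff_forall_not_mem.2 fun x hx =>
      (hm x hx).not_ge (hIcc x (hs.mem_iff.2 (mem_cons_of_mem m hx))).2
    rw [perm_singleton.1 hs, perm_singleton.1 (hpq.symm.trans hs)]
  have hlo : lo < m := (hIoc m hmp).1
  obtain hp | hp := rising_or_rising_reverse hnd hIcc hmp hhi hmhi <;>
    obtain hq | hq := rising_or_rising_reverse hnd'
      (fun x hx => hIcc x (hpq.mem_iff.2 hx)) (hpq.mem_iff.1 hmp) hhi' hmhi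
  · exact ForgottenEqv.cons lo (H hn hp hq hpq hinv)
  · exact H.forgottenEqv_cons_cons_of_reverse hn hlo hp hq hpq hinv
  · exact ForgottenEqv.symm <| H.forgottenEqv_cons_cons_of_reverse
      (hpq.length_eq.symm.trans hn) hlo hq hp hpq.symm hinv.symm
  · exact ForgottenEqv.cons lo (H.forgottenEqv_of_reverse hn hp hq hpq hinv)

end RisingClassification

theorem risingClassification (n : ℕ) : RisingClassification α n := by
  induction n with
  | zero =>
    intro lo hi p q hn hp
    simpa [length_eq_zero_iff.1 hn] using hp.sublist
  | succ n H =>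
    intro lo hi p q hn hp hq hpq hinv
    obtain ⟨p', hp'⟩ := hp.exists_forgottenEqv_cons
    obtain ⟨q', hq'⟩ := hq.exists_forgottenEqv_cons
    have rising_p' := hp.of_forgottenEqv hp'
    have rising_q' := hq.of_forgottenEqv hq'
    have hperm : p' ~ q' := (perm_cons lo).1
      ((ForgottenEqv.perm hp').symm.trans (hpq.trans (ForgottenEqv.perm hq')))
    have hlen : p'.length = n := by simpa [hn] using (ForgottenEqv.perm hp').length_eq.symm
    have hinv' : invCount p' = invCount q' := by
      rwa [ForgottenEqv.invCount_eq hp', ForgottenEqv.invCount_eq hq',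
        invCount_cons_of_forall_le fun x hx => ((rising_cons_iff.1 rising_p').2.2 x hx).1.le,
        invCount_cons_of_forall_le fun x hx => ((rising_cons_iff.1 rising_q').2.2 x hx).1.le]
        at hinv
    exact hp'.trans ((H.forgottenEqv_cons_cons hlen rising_p' rising_q' hperm hinv').trans
      (ForgottenEqv.symm hq'))

theorem forgottenEqv_iff {lo hi : α} {p q : List α} (hnd : p.Nodup)
    (hIcc : ∀ x ∈ p, x ∈ Set.Icc lo hi) (hlo : lo ∈ p) (hhi : hi ∈ p) (hne : lo ≠ hi) :
    ForgottenEqv p q ↔ p ~ q ∧ invCount p = invCount q ∧ ([lo, hi] <+ p ↔ [lo, hi] <+ q) := by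
  constructor
  · intro h
    have hperm := ForgottenEqv.perm h
    exact ⟨hperm, ForgottenEqv.invCount_eq h,
      ForgottenEqv.sublist_of_extremes (by simp) h hIcc,
      ForgottenEqv.sublist_of_extremes (by simp) (ForgottenEqv.symm h)
        fun x hx => hIcc x (hperm.mem_iff.2 hx)⟩
  · rintro ⟨hperm, hinv, hsub⟩
    by_cases hp : [lo, hi] <+ p
    · have hp' : Rising lo hi p := ⟨hnd, hIcc, hp⟩
      exact risingClassification _ rfl hp' (hp'.of_perm hperm (hsub.1 hp)) hperm hinv
    · have hp' := (rising_or_rising_reverse hnd hIcc hlo hhi hne).resolve_left fun h => hp h.sublist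
      have hq' := (rising_or_rising_reverse (hperm.nodup_iff.1 hnd)
        (fun x hx => hIcc x (hperm.mem_iff.2 hx)) (hperm.mem_iff.1 hlo) (hperm.mem_iff.1 hhi)
        hne).resolve_left fun h => hp (hsub.2 h.sublist)
      exact (risingClassification _).forgottenEqv_of_reverse rfl hp' hq' hperm hinv

/-- What a twisted move does to the positions `a`, `b`, `c` of three consecutive values: among
distinct letters, `a` or `c` jumps over the two others if it lies between them. -/
def twist (a b c : α) : List α :=
  if a ∈ Set.Ioo (min b c) (max b c) then [b, c, a]
  else if c ∈ Set.Ioo (min a b) (max a b) then [c, a, b]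
  else [a, b, c]

theorem twist_eq_or_forgottenStep (s t : List α) (a b c : α) :
    twist a b c = [a, b, c] ∨
      ForgottenStep (s ++ ([a, b, c] ++ t)) (s ++ (twist a b c ++ t)) := by
  unfold twist
  split_ifs with ha hc
  · exact .inr (.jumpRight s t ha)
  · exact .inr (.jumpLeft s t hc)
  · exact .inl rfl

theorem ForgottenStep.exists_twist {p q : List α} (h : ForgottenStep p q) :
    ∃ s a b c t, p = s ++ ([a, b, c] ++ t) ∧ q = s ++ (twist a b c ++ t) := by
  cases h with
  | @jumpRight x m y s t h =>
    have : twist m x y = [x, y, m] := if_pos h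
    exact ⟨s, m, x, y, t, rfl, by simp [this]⟩
  | @jumpLeft x m y s t h =>
    have hx : x ∉ Set.uIoo y m := by
      simp only [mem_uIoo_iff] at h ⊢
      grind
    have : twist x y m = [m, x, y] := (if_neg hx).trans (if_pos h)
    exact ⟨s, x, y, m, t, rfl, by simp [this]⟩

end Words

section Permutations

open List

variable {n k : ℕ} {w u : Equiv.Perm (Fin n)}

theorem exists_ofFn_eq_append {β : Type*} {f g : Fin n → β} (hk : k + 2 < n)
    (h : ∀ i : Fin n, i.val ∉ [k, k + 1, k + 2] → g i = f i) :
    ∃ s t, s.length = k ∧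
      ofFn f = s ++ ([f ⟨k, by omega⟩, f ⟨k + 1, by omega⟩, f ⟨k + 2, hk⟩] ++ t) ∧
      ofFn g = s ++ ([g ⟨k, by omega⟩, g ⟨k + 1, by omega⟩, g ⟨k + 2, hk⟩] ++ t) := by
  have split (f : Fin n → β) : ofFn f = (ofFn f).take k ++
      ([f ⟨k, by omega⟩, f ⟨k + 1, by omega⟩, f ⟨k + 2, hk⟩] ++ (ofFn f).drop (k + 3)) := by
    conv_lhs => rw [← take_append_drop k (ofFn f)]
    rw [drop_eq_getElem_cons (by grind), drop_eq_getElem_cons (by grind),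
      drop_eq_getElem_cons (by grind)]
    simp
  have take_eq : (ofFn g).take k = (ofFn f).take k :=
    ext_getElem (by simp) fun i hi _ => by
      simp only [length_take, length_ofFn] at hi
      simpa using h ⟨i, by omega⟩ (by grind)
  have drop_eq : (ofFn g).drop (k + 3) = (ofFn f).drop (k + 3) :=
    ext_getElem (by simp) fun i hi _ => by
      simp only [length_drop, length_ofFn] at hi
      simpa using h ⟨k + 3 + i, by omega⟩ (by grind)
  exact ⟨(ofFn f).take k, (ofFn f).drop (k + 3), by grind, split f,
    take_eq ▸ drop_eq ▸ split g⟩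

theorem dtmove_symm_apply_of_notMem {v : Fin n} (hv : v.val ∉ [k, k + 1, k + 2]) :
    (dtmove n (k + 1) w).symm v = w.symm v := by
  simp only [mem_cons, not_mem_nil, or_false, not_or] at hv
  simp only [dtmove]
  split_ifs <;> simp [← Equiv.Perm.inv_def, Equiv.swap_apply_def, Fin.ext_iff, hv]

theorem swap_mul_swap_mul_symm_apply {β : Type*} [DecidableEq β] {x y z : β} (hxy : x ≠ y)
    (hxz : x ≠ z) (hyz : y ≠ z) (w : Equiv.Perm β) :
    (Equiv.swap x y * Equiv.swap y z * w).symm x = w.symm z ∧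
      (Equiv.swap x y * Equiv.swap y z * w).symm y = w.symm x ∧
      (Equiv.swap x y * Equiv.swap y z * w).symm z = w.symm y := by
  simp [← Equiv.Perm.inv_def, Equiv.swap_apply_of_ne_of_ne, hxy, hxz, hxz.symm, hyz.symm]

theorem dtmove_symm_apply_triple (hk : k + 2 < n) :
    [(dtmove n (k + 1) w).symm ⟨k, by omega⟩, (dtmove n (k + 1) w).symm ⟨k + 1, by omega⟩,
        (dtmove n (k + 1) w).symm ⟨k + 2, hk⟩] =
      twist (w.symm ⟨k, by omega⟩) (w.symm ⟨k + 1, by omega⟩) (w.symm ⟨k + 2, hk⟩) := by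
  have hk' : 1 ≤ k + 1 ∧ k + 1 + 1 < n := ⟨by omega, hk⟩
  simp only [dtmove, dif_pos hk', twist, Nat.add_sub_cancel]
  have hab : (⟨k, by omega⟩ : Fin n) ≠ ⟨k + 1, by omega⟩ := by simp
  have hac : (⟨k, by omega⟩ : Fin n) ≠ ⟨k + 2, hk⟩ := by simp
  have hbc : (⟨k + 1, by omega⟩ : Fin n) ≠ ⟨k + 2, hk⟩ := by simp
  generalize (⟨k, _⟩ : Fin n) = a, (⟨k + 1, _⟩ : Fin n) = b, (⟨k + 2, hk⟩ : Fin n) = c at *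
  have := w.symm.injective.ne hab
  have := w.symm.injective.ne hac
  have := w.symm.injective.ne hbc
  split_ifs <;> grind [swap_mul_swap_mul_symm_apply]

/-- The letters are the positions of the values `0, 1, …, n - 1`: this is the one-line notation of
the inverse permutation. -/
def posWord (w : Equiv.Perm (Fin n)) : List (Fin n) :=
  ofFn w.symm

theorem posWord_injective : Function.Injective (posWord (n := n)) := fun _ _ h =>
  Equiv.symm_bijective.injective (DFunLike.coe_injective (ofFn_injective h))

theorem nodup_posWord (w : Equiv.Perm (Fin n)) : (posWord w).Nodup :=
  nodup_ofFn.2 w.symm.injective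

theorem mem_posWord (w : Equiv.Perm (Fin n)) (i : Fin n) : i ∈ posWord w :=
  mem_ofFn.2 (w.symm.surjective i)

theorem posWord_perm (w u : Equiv.Perm (Fin n)) : posWord w ~ posWord u :=
  (perm_ext_iff_of_nodup (nodup_posWord w) (nodup_posWord u)).2 fun i => by simp [mem_posWord]

theorem pair_sublist_posWord_iff {i j : Fin n} : [i, j] <+ posWord w ↔ w i < w j := by
  have hpw : (posWord w).Pairwise (w · < w ·) := pairwise_ofFn.2 fun a b hab => by simpa using hab
  refine ⟨fun h => pairwise_iff_forall_sublist.1 hpw h, fun h => ?_⟩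
  have : [w i, w j] <+ finRange n :=
    sublist_of_subperm_of_pairwise (subperm_of_subset (by simpa using h.ne) (by simp))
      (by simpa using h) (pairwise_lt_finRange n)
  simpa [posWord, ofFn_eq_map] using this.map w.symm

theorem countP_ofFn {β : Type*} (f : Fin n → β) (P : β → Prop) [DecidablePred P] :
    (ofFn f).countP (P ·) = Finset.card {i | P (f i)} := by
  induction n with
  | zero => simp
  | succ n ih =>
    rw [ofFn_succ, countP_cons, ih, Fin.card_filter_univ_succ]
    split_ifs <;> simp_all

theorem invCount_ofFn {α : Type*} [LinearOrder α] (f : Fin n → α) :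
    invCount (ofFn f) = Finset.card {ij : Fin n × Fin n | ij.1 < ij.2 ∧ f ij.2 < f ij.1} := by
  have card_eq_sum {n : ℕ} (f : Fin n → α) :
      Finset.card {ij : Fin n × Fin n | ij.1 < ij.2 ∧ f ij.2 < f ij.1} =
        ∑ i, Finset.card {j | i < j ∧ f j < f i} := by
    simp only [Finset.card_filter, Fintype.sum_prod_type]
  rw [card_eq_sum]
  induction n with
  | zero => simp [invCount]
  | succ n ih =>
    simp [ofFn_succ, invCount, ih, countP_ofFn _ (· < f 0), Fin.sum_univ_succ,
      Fin.card_filter_univ_succ]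

theorem invCount_posWord (w : Equiv.Perm (Fin n)) : invCount (posWord w) = linv n w := by
  rw [posWord, invCount_ofFn, linv]
  refine Finset.card_equiv ((Equiv.prodComm _ _).trans (w.symm.prodCongr w.symm)) fun ij => ?_
  simp [and_comm]

theorem exists_posWord_eq_append (hk : k + 2 < n) (w : Equiv.Perm (Fin n)) :
    ∃ s a b c t, s.length = k ∧ posWord w = s ++ ([a, b, c] ++ t) ∧
      posWord (dtmove n (k + 1) w) = s ++ (twist a b c ++ t) := by
  obtain ⟨s, t, hs, hw, hdw⟩ := exists_ofFn_eq_append (f := w.symm) hk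
    fun v => dtmove_symm_apply_of_notMem (w := w)
  rw [dtmove_symm_apply_triple hk] at hdw
  exact ⟨s, _, _, _, t, hs, hw, hdw⟩

theorem forgottenEqv_posWord_dtmove (hk : k + 2 < n) (w : Equiv.Perm (Fin n)) :
    ForgottenEqv (posWord w) (posWord (dtmove n (k + 1) w)) := by
  obtain ⟨s, a, b, c, t, -, hw, hdw⟩ := exists_posWord_eq_append hk w
  rw [hw, hdw]
  obtain h | h := twist_eq_or_forgottenStep s t a b c
  · rw [h]
  · exact .single h

theorem ForgottenStep.exists_posWord_dtmove_eq {q : List (Fin n)}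
    (h : ForgottenStep (posWord w) q) :
    ∃ k, k + 2 < n ∧ posWord (dtmove n (k + 1) w) = q := by
  obtain ⟨s, a, b, c, t, hw, rfl⟩ := h.exists_twist
  have hk : s.length + 2 < n := by
    have : n = s.length + (t.length + 3) := by simpa [posWord] using congrArg length hw
    omega
  obtain ⟨s', a', b', c', t', hs, hw', hdw⟩ := exists_posWord_eq_append hk w
  obtain ⟨rfl, htail⟩ := append_inj (hw'.symm.trans hw) hs
  obtain ⟨htriple, rfl⟩ := append_inj htail rfl
  obtain ⟨rfl, rfl, rfl⟩ : a' = a ∧ b' = b ∧ c' = c := by simpa using htriple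
  exact ⟨s'.length, hk, hdw⟩

theorem ForgottenEqv.exists_foldl_dtmove {q : List (Fin n)} (h : ForgottenEqv (posWord w) q) :
    ∃ l : List ℕ, (∀ i ∈ l, 1 ≤ i ∧ i + 1 < n) ∧
      posWord (l.foldl (fun v i => dtmove n i v) w) = q := by
  induction h with
  | refl => exact ⟨[], by simp, rfl⟩
  | tail _ h ih =>
    obtain ⟨l, hl, rfl⟩ := ih
    obtain ⟨k, hk, rfl⟩ := h.exists_posWord_dtmove_eq
    refine ⟨l ++ [k + 1], ?_, by simp⟩
    exact forall_mem_append.2 ⟨hl, forall_mem_singleton.2 ⟨by omega, hk⟩⟩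

theorem exists_foldl_dtmove_iff :
    (∃ l : List ℕ, (∀ i ∈ l, 1 ≤ i ∧ i + 1 < n) ∧ l.foldl (fun v i => dtmove n i v) w = u) ↔
      ForgottenEqv (posWord w) (posWord u) := by
  constructor
  · rintro ⟨l, hl, rfl⟩
    induction l generalizing w with
    | nil => exact .refl
    | cons i l ih =>
      obtain ⟨⟨hi, hin⟩, hl'⟩ := forall_mem_cons.1 hl
      obtain ⟨k, rfl⟩ := Nat.exists_eq_add_of_le' hi
      exact (forgottenEqv_posWord_dtmove hin w).trans (ih hl')
  · intro h
    obtain ⟨l, hl, hlu⟩ := ForgottenEqv.exists_foldl_dtmove h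
    exact ⟨l, hl, posWord_injective hlu⟩

end Permutations

/-- two permutations of `{1,…,n}` are connected by a sequence of
twisted dual equivalence moves `d̃_i` if and only if they have the same number
of inversions and the same truth value of `w₁ > w_n`. -/
theorem dtmove_classes (n : ℕ) (hn : 2 ≤ n) (w u : Equiv.Perm (Fin n)) :
    (∃ l : List ℕ, (∀ i ∈ l, 1 ≤ i ∧ i + 1 < n) ∧
        l.foldl (fun v i => dtmove n i v) w = u) ↔
      (linv n w = linv n u ∧
        (w ⟨n - 1, by omega⟩ < w ⟨0, by omega⟩ ↔
          u ⟨n - 1, by omega⟩ < u ⟨0, by omega⟩)) := by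
  set lo : Fin n := ⟨0, by omega⟩
  set hi : Fin n := ⟨n - 1, by omega⟩
  have hlohi : lo ≠ hi := Fin.ne_of_val_ne (by grind)
  have hIcc : ∀ i ∈ posWord w, i ∈ Set.Icc lo hi := fun i _ =>
    ⟨Fin.mk_le_of_le_val i.val.zero_le, Fin.le_def.2 (Nat.le_sub_one_of_lt i.isLt)⟩
  have extremes (v : Equiv.Perm (Fin n)) : v hi < v lo ↔ ¬[lo, hi].Sublist (posWord v) := by
    rw [pair_sublist_posWord_iff, not_lt, (v.injective.ne hlohi).symm.le_iff_lt]
  rw [exists_foldl_dtmove_iff,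
    forgottenEqv_iff (nodup_posWord w) hIcc (mem_posWord w lo) (mem_posWord w hi) hlohi,
    invCount_posWord, invCount_posWord, extremes, extremes, not_iff_not]
  exact and_iff_right (posWord_perm w u)
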